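/- For n ≥ 2, the order complex Δ(overline{Π}_n) of the partition lattice of [n] with extremes removed has Euler characteristic 1 + (-1)^{n-3}(n-1)!. -/

import Mathlib

/-!
By Philip Hall's theorem the Möbius number `μ(⊥, ⊤)` of a bounded poset is minus the alternating
sum `∑ (-1) ^ #s` over the chains `s` of its proper part, that is, the reduced Euler
characteristic of the order complex; the unreduced one is larger by one.

The Möbius number of the partition lattice is computed following Rota. A map from `α` to a set of
`m` colours that is constant on the blocks of `c` has a kernel `d ≥ c`, and the maps with kernel
exactly `d` are the injections of the blocks of `d`, so
`m ^ |c| = ∑ d ≥ c, m (m - 1) ⋯ (m - |d| + 1)`, where `|c|` is the number of blocks. This is an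
identity of polynomials in `m`. Its linear coefficients say that `[c = ⊤]` is the sum over `d ≥ c`
of the linear coefficient `(-1) ^ (|d| - 1) (|d| - 1)!`, and Möbius inversion identifies the latter
with `μ(d, ⊤)`.
-/

open Finset IncidenceAlgebra

section Hall

variable {L : Type*} [PartialOrder L] [LocallyFiniteOrder L] {a b c d : L} {s t u : Finset L}

open scoped Classical in
/-- The finite chains, possibly empty, in the open interval `(a, b)`: the faces of the order
complex of this interval, including the empty face. -/
noncomputable def chainsIoo (a b : L) : Finset (Finset L) :=
  {s ∈ (Ioo a b).powerset | IsChain (· ≤ ·) (s : Set L)}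

theorem mem_chainsIoo :
    s ∈ chainsIoo a b ↔ (∀ x ∈ s, a < x ∧ x < b) ∧ IsChain (· ≤ ·) (s : Set L) := by
  simp [chainsIoo, subset_iff]

theorem empty_mem_chainsIoo (a b : L) : ∅ ∈ chainsIoo a b := by
  simp [mem_chainsIoo]

theorem notMem_of_mem_chainsIoo (hs : s ∈ chainsIoo a b) : a ∉ s := fun ha =>
  ((mem_chainsIoo.1 hs).1 a ha).1.false

theorem card_le_of_mem_chainsIoo {β : Type*} [Preorder β] [LocallyFiniteOrder β] {f : L → β}
    (hf : StrictAnti f) (hs : s ∈ chainsIoo a b) : #s ≤ #(Ioo (f b) (f a)) := by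
  obtain ⟨hab, hchain⟩ := mem_chainsIoo.1 hs
  refine card_le_card_of_injOn f (fun x hx => ?_) fun x hx y hy hxy => ?_
  · exact mem_coe.2 (mem_Ioo.2 ⟨hf (hab x hx).2, hf (hab x hx).1⟩)
  · by_contra hne
    rcases hchain hx hy hne with hle | hle
    · exact (hf (hle.lt_of_ne hne)).ne' hxy
    · exact (hf (hle.lt_of_ne' hne)).ne hxy

section InsertMin

variable [DecidableEq L]

theorem insert_mem_chainsIoo (hd : d ∈ Ioo a b) (ht : t ∈ chainsIoo d b) :
    insert d t ∈ chainsIoo a b := by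
  obtain ⟨had, hdb⟩ := mem_Ioo.1 hd
  obtain ⟨hdt, hchain⟩ := mem_chainsIoo.1 ht
  refine mem_chainsIoo.2 ⟨?_, ?_⟩
  · exact (forall_mem_insert ..).2 ⟨⟨had, hdb⟩, fun x hx => ⟨had.trans (hdt x hx).1, (hdt x hx).2⟩⟩
  · rw [coe_insert]
    exact hchain.insert fun x hx _ => Or.inl (hdt x hx).1.le

theorem exists_insert_eq_of_mem_chainsIoo (hs : s ∈ chainsIoo a b) (hne : s.Nonempty) :
    ∃ d ∈ Ioo a b, ∃ t ∈ chainsIoo d b, insert d t = s := by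
  obtain ⟨hab, hchain⟩ := mem_chainsIoo.1 hs
  obtain ⟨d, hd, hmin⟩ := exists_minimal hne
  have hlt : ∀ x ∈ s.erase d, d < x := fun x hx => by
    obtain ⟨hxd, hxs⟩ := mem_erase.1 hx
    exact ((hchain.total hd hxs).elim id (hmin hxs)).lt_of_ne' hxd
  refine ⟨d, mem_Ioo.2 (hab d hd), s.erase d, mem_chainsIoo.2 ⟨fun x hx => ?_, ?_⟩,
    insert_erase hd⟩
  · exact ⟨hlt x hx, (hab x (mem_of_mem_erase hx)).2⟩
  · exact hchain.mono (coe_subset.2 (erase_subset d s))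

theorem eq_of_insert_eq_insert_of_mem_chainsIoo (ht : t ∈ chainsIoo c b) (hu : u ∈ chainsIoo d b)
    (h : insert c t = insert d u) : c = d ∧ t = u := by
  have hcd : c = d := by
    by_contra hne
    have hcu : c ∈ u := mem_of_mem_insert_of_ne (h ▸ mem_insert_self c t) hne
    have hdt : d ∈ t := mem_of_mem_insert_of_ne (h ▸ mem_insert_self d u) (Ne.symm hne)
    exact lt_asymm ((mem_chainsIoo.1 hu).1 c hcu).1 ((mem_chainsIoo.1 ht).1 d hdt).1
  subst hcd
  refine ⟨rfl, ?_⟩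
  rw [← erase_insert (notMem_of_mem_chainsIoo ht), h, erase_insert (notMem_of_mem_chainsIoo hu)]

theorem sum_chainsIoo_eq_add_sum_insert {M : Type*} [AddCommMonoid M] (g : Finset L → M)
    (a b : L) :
    ∑ s ∈ chainsIoo a b, g s = g ∅ + ∑ d ∈ Ioo a b, ∑ t ∈ chainsIoo d b, g (insert d t) := by
  rw [← add_sum_erase _ g (empty_mem_chainsIoo a b), sum_sigma']
  congr 1
  symm
  refine sum_nbij (fun p => insert p.1 p.2) ?_ ?_ ?_ fun _ _ => rfl
  · intro p hp
    obtain ⟨hd, ht⟩ := mem_sigma.1 hp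
    exact mem_erase.2 ⟨insert_ne_empty _ _, insert_mem_chainsIoo hd ht⟩
  · rintro ⟨c, t⟩ hp ⟨d, u⟩ hq h
    obtain ⟨rfl, rfl⟩ := eq_of_insert_eq_insert_of_mem_chainsIoo (mem_sigma.1 hp).2
      (mem_sigma.1 hq).2 h
    rfl
  · intro s hs
    obtain ⟨hne, hs⟩ := mem_erase.1 hs
    obtain ⟨d, hd, t, ht, rfl⟩ :=
      exists_insert_eq_of_mem_chainsIoo hs (nonempty_iff_ne_empty.2 hne)
    exact ⟨⟨d, t⟩, mem_sigma.2 ⟨hd, ht⟩, rfl⟩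

end InsertMin

variable (R : Type*) [Ring R]

theorem sum_neg_one_pow_card_chainsIoo (a b : L) :
    ∑ s ∈ chainsIoo a b, (-1 : R) ^ #s =
      1 - ∑ d ∈ Ioo a b, ∑ t ∈ chainsIoo d b, (-1 : R) ^ #t := by
  classical
  rw [sum_chainsIoo_eq_add_sum_insert, card_empty, pow_zero, sub_eq_add_neg, ← sum_neg_distrib]
  congr 1
  refine sum_congr rfl fun d _ => ?_
  rw [← sum_neg_distrib]
  refine sum_congr rfl fun t ht => ?_
  rw [card_insert_of_notMem (notMem_of_mem_chainsIoo ht), pow_succ, mul_neg_one]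

theorem mu_eq_neg_sum_chainsIoo [DecidableEq L] (hab : a < b) :
    mu R a b = -∑ s ∈ chainsIoo a b, (-1 : R) ^ #s := by
  induction hcard : #(Icc a b) using Nat.strong_induction_on generalizing a with
  | _ k ih =>
    have hmu : ∀ d ∈ Ioo a b, mu R d b = -∑ s ∈ chainsIoo d b, (-1 : R) ^ #s := fun d hd => by
      obtain ⟨had, hdb⟩ := mem_Ioo.1 hd
      exact ih _ (hcard ▸ card_lt_card (Icc_ssubset_Icc_left hab.le had le_rfl)) hdb rfl
    rw [mu_eq_neg_sum_Ioc_of_ne hab.ne, ← Ioo_insert_right hab, sum_insert right_notMem_Ioo,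
      mu_self, sum_congr rfl hmu, sum_neg_distrib, ← sub_eq_add_neg,
      ← sum_neg_one_pow_card_chainsIoo]

end Hall

section OrderComplex

theorem sum_neg_one_pow_mul_card_slice_succ {α R : Type*} [Ring R] {𝒜 : Finset (Finset α)} {N : ℕ}
    (hempty : ∅ ∈ 𝒜) (hcard : ∀ s ∈ 𝒜, #s ≤ N) :
    ∑ m ∈ range N, (-1 : R) ^ m * (#(𝒜.slice (m + 1)) : R) = 1 - ∑ s ∈ 𝒜, (-1 : R) ^ #s := by
  have hslice_zero : 𝒜.slice 0 = {∅} := by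
    ext s
    simp only [mem_slice, card_eq_zero, mem_singleton]
    exact ⟨And.right, fun hs => ⟨hs ▸ hempty, hs⟩⟩
  have hsum : ∑ s ∈ 𝒜, (-1 : R) ^ #s =
      ∑ m ∈ range (N + 1), (-1 : R) ^ m * (#(𝒜.slice m) : R) := by
    rw [← sum_fiberwise_of_maps_to fun s hs => mem_range_succ_iff.2 (hcard s hs)]
    refine sum_congr rfl fun m _ => ?_
    rw [sum_congr rfl fun s hs => congrArg _ (mem_filter.1 hs).2, sum_const, nsmul_eq_mul,
      Nat.cast_comm, slice]
  rw [hsum, sum_range_succ', hslice_zero]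
  simp [pow_succ]

variable {L : Type*} [PartialOrder L] [BoundedOrder L] [LocallyFiniteOrder L]

theorem ncard_chains_proper_part (k : ℕ) :
    {s : Finset {c : L // c ≠ ⊥ ∧ c ≠ ⊤} |
        s.card = k ∧ IsChain (· ≤ ·) (s : Set {c : L // c ≠ ⊥ ∧ c ≠ ⊤})}.ncard =
      #((chainsIoo (⊥ : L) ⊤).slice k) := by
  rw [← Set.ncard_image_of_injective _ (map_injective (.subtype _)), ← Set.ncard_coe_finset]
  congr 1
  ext s
  simp only [Set.mem_image, Set.mem_ofPred_eq, mem_coe, mem_slice, mem_chainsIoo, bot_lt_iff_ne_bot,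
    lt_top_iff_ne_top]
  constructor
  · rintro ⟨t, ⟨rfl, ht⟩, rfl⟩
    refine ⟨⟨fun x hx => property_of_mem_map_subtype t hx, ?_⟩, card_map _⟩
    rw [coe_map]
    exact ht.image (OrderEmbedding.subtype _)
  · rintro ⟨⟨hs, hchain⟩, rfl⟩
    classical
    refine ⟨s.subtype _, ⟨?_, ?_⟩, subtype_map_of_mem hs⟩
    · rw [← card_map (.subtype _), subtype_map_of_mem hs]
    · exact fun x hx y hy hxy => hchain (mem_subtype.1 hx) (mem_subtype.1 hy)
        (Subtype.coe_ne_coe.2 hxy)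

theorem euler_char_orderComplex_proper_part [Nontrivial L] [DecidableEq L] (R : Type*) [Ring R]
    {N : ℕ} (hN : ∀ s ∈ chainsIoo (⊥ : L) ⊤, #s ≤ N) :
    ∑ m ∈ range N, (-1 : R) ^ m *
        ({s : Finset {c : L // c ≠ ⊥ ∧ c ≠ ⊤} |
            s.card = m + 1 ∧ IsChain (· ≤ ·) (s : Set {c : L // c ≠ ⊥ ∧ c ≠ ⊤})}.ncard : R) =
      1 + eulerChar R L := by
  simp only [ncard_chains_proper_part]
  rw [sum_neg_one_pow_mul_card_slice_succ (empty_mem_chainsIoo ⊥ ⊤) hN, eulerChar,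
    mu_eq_neg_sum_chainsIoo R bot_lt_top, sub_eq_add_neg]

end OrderComplex

section PartitionLattice

theorem coeff_one_descPochhammer_succ (R : Type*) [CommRing R] (k : ℕ) :
    (descPochhammer R (k + 1)).coeff 1 = (-1) ^ k * (k.factorial : R) := by
  have heval : (-1 : R) ^ k * (descPochhammer R k).eval (-1) = k.factorial := by
    rw [← ascPochhammer_eval_neg_eq_descPochhammer, neg_neg, ascPochhammer_eval_one]
  rw [← heval, ← mul_assoc, ← mul_pow, neg_one_mul, neg_neg, one_pow, one_mul,
    descPochhammer_succ_left, Polynomial.coeff_X_mul, Polynomial.coeff_zero_eq_eval_zero]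
  simp [Polynomial.eval_comp]

variable {α : Type*}

/-- Maps with kernel `d` correspond to injections of the blocks of `d`. -/
def kerEqEquivEmbedding (d : Setoid α) (β : Type*) :
    {f : α → β // Setoid.ker f = d} ≃ (Quotient d ↪ β) where
  toFun f := ⟨Quotient.lift f.1 fun _ _ h => by rwa [← f.2] at h, by
    obtain ⟨f, rfl⟩ := f
    exact Setoid.kerLift_injective f⟩
  invFun g := ⟨g ∘ Quotient.mk d, Setoid.ext fun x y => by
    rw [Setoid.ker_def, Function.comp_apply, Function.comp_apply, g.injective.eq_iff, Quotient.eq]⟩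
  left_inv _ := rfl
  right_inv g := by
    ext q
    induction q using Quotient.inductionOn
    rfl

instance nontrivial_setoid [Nontrivial α] : Nontrivial (Setoid α) := by
  obtain ⟨x, y, hxy⟩ := exists_pair_ne α
  exact ⟨⊥, ⊤, fun h => hxy (Setoid.eq_top_iff.1 h x y)⟩

theorem card_quotient_eq_one_iff [Nonempty α] {c : Setoid α} :
    Nat.card (Quotient c) = 1 ↔ c = ⊤ := by
  rw [Nat.card_eq_one_iff_unique, Quotient.subsingleton_iff]
  exact and_iff_left (Nonempty.map (Quotient.mk c) ‹_›)

variable [Finite α]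

instance finite_setoid : Finite (Setoid α) :=
  Finite.of_injective _ fun _ _ => Setoid.eq_iff_rel_eq.2

noncomputable instance locallyFiniteOrderSetoid : LocallyFiniteOrder (Setoid α) :=
  .ofFiniteIcc fun _ _ => Set.toFinite _

theorem nat_card_ker_eq (d : Setoid α) (m : ℕ) :
    Nat.card {f : α → Fin m // Setoid.ker f = d} = m.descFactorial (Nat.card (Quotient d)) := by
  have := Fintype.ofFinite (Quotient d)
  have := Fintype.ofFinite (Quotient d ↪ Fin m)
  rw [Nat.card_congr (kerEqEquivEmbedding d (Fin m)), Nat.card_eq_fintype_card,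
    Fintype.card_embedding_eq, Fintype.card_fin, Nat.card_eq_fintype_card]

theorem sum_Ici_descFactorial_card_quotient (c : Setoid α) (m : ℕ) :
    ∑ d ∈ Ici c, m.descFactorial (Nat.card (Quotient d)) = m ^ Nat.card (Quotient c) := by
  classical
  have := Fintype.ofFinite α
  have hlift : #{f : α → Fin m | c ≤ Setoid.ker f} = m ^ Nat.card (Quotient c) := by
    rw [← Fintype.card_subtype, ← Nat.card_eq_fintype_card, Nat.card_congr (Setoid.liftEquiv c),
      Nat.card_fun, Nat.card_fin]
  rw [← hlift, card_eq_sum_card_fiberwise (f := Setoid.ker) (t := Ici c) fun f hf => by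
    simpa using hf]
  refine sum_congr rfl fun d hd => ?_
  rw [← nat_card_ker_eq, Nat.card_eq_fintype_card, Fintype.card_subtype, filter_filter]
  refine congrArg card (filter_congr fun f _ => ?_)
  exact ⟨fun h => ⟨h ▸ mem_Ici.1 hd, h⟩, And.right⟩

theorem sum_Ici_descPochhammer_card_quotient (R : Type*) [Ring R] (c : Setoid α) :
    ∑ d ∈ Ici c, descPochhammer R (Nat.card (Quotient d)) =
      Polynomial.X ^ Nat.card (Quotient c) := by
  have hint : ∑ d ∈ Ici c, descPochhammer ℤ (Nat.card (Quotient d)) =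
      Polynomial.X ^ Nat.card (Quotient c) := by
    refine Polynomial.eq_of_infinite_eval_eq _ _
      ((Set.infinite_range_of_injective Nat.cast_injective).mono ?_)
    rintro _ ⟨m, rfl⟩
    simp only [Set.mem_ofPred_eq, Polynomial.eval_finsetSum, descPochhammer_eval_eq_descFactorial,
      Polynomial.eval_pow, Polynomial.eval_X]
    exact_mod_cast sum_Ici_descFactorial_card_quotient c m
  simpa only [Polynomial.map_sum, descPochhammer_map, Polynomial.map_pow, Polynomial.map_X] using
    congrArg (Polynomial.map (Int.castRingHom R)) hint

theorem card_quotient_strictAnti : StrictAnti fun c : Setoid α => Nat.card (Quotient c) := by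
  intro c d hcd
  have hsurj : Function.Surjective (Setoid.map_of_le hcd.le) :=
    Quotient.mk_surjective.forall.2 fun x => ⟨Quotient.mk c x, rfl⟩
  refine (Nat.card_le_card_of_surjective _ hsurj).lt_of_ne fun hcard => hcd.not_ge ?_
  have hinj := ((Nat.bijective_iff_surjective_and_card _).2 ⟨hsurj, hcard.symm⟩).injective
  exact fun x y hxy => Quotient.exact (hinj (Quotient.sound hxy))

theorem card_le_of_mem_chainsIoo_setoid {s : Finset (Setoid α)}
    (hs : s ∈ chainsIoo ⊥ ⊤) : #s ≤ Nat.card α := by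
  have hcard := card_le_of_mem_chainsIoo card_quotient_strictAnti hs
  rw [Nat.card_Ioo, Nat.card_congr Setoid.quotientBotEquiv] at hcard
  lia

variable (R : Type*) [CommRing R]

theorem mu_setoid_top [Nonempty α] [DecidableEq (Setoid α)] (c : Setoid α) :
    mu R c ⊤ =
      (-1) ^ (Nat.card (Quotient c) - 1) * ((Nat.card (Quotient c) - 1).factorial : R) := by
  have hsum : ∀ d : Setoid α, (if d = ⊤ then 1 else 0) =
      ∑ e ∈ Ici d, (descPochhammer R (Nat.card (Quotient e))).coeff 1 := fun d => by
    rw [← Polynomial.finsetSum_coeff, sum_Ici_descPochhammer_card_quotient, Polynomial.coeff_X_pow]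
    simp only [eq_comm (a := 1), card_quotient_eq_one_iff]
  have hinv := moebius_inversion_top _ _ hsum c
  simp only [mul_ite, mul_one, mul_zero, sum_ite_eq', mem_Ici, le_top, if_true] at hinv
  have : Nonempty (Quotient c) := Nonempty.map (Quotient.mk c) ‹_›
  rw [← hinv, ← coeff_one_descPochhammer_succ, Nat.sub_add_cancel Nat.card_pos]

theorem eulerChar_setoid [Nonempty α] [DecidableEq (Setoid α)] :
    eulerChar R (Setoid α) = (-1) ^ (Nat.card α - 1) * ((Nat.card α - 1).factorial : R) := by
  rw [eulerChar, mu_setoid_top, Nat.card_congr Setoid.quotientBotEquiv]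

end PartitionLattice

theorem neg_one_zpow_natCast_sub_three {K : Type*} [DivisionRing K] {n : ℕ} (hn : 1 ≤ n) :
    (-1 : K) ^ ((n : ℤ) - 3) = (-1) ^ (n - 1) := by
  rw [show (n : ℤ) - 3 = (n - 1 : ℕ) - 2 by lia, zpow_sub₀ (by simp), zpow_natCast]
  norm_num

theorem euler_char_orderComplex_partition_lattice_general (α : Type*) [Finite α] [Nontrivial α] :
    ∑ m ∈ range (Nat.card α + 1), (-1 : ℚ) ^ m *
        ({s : Finset {c : Setoid α // c ≠ ⊥ ∧ c ≠ ⊤} |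
            s.card = m + 1 ∧ IsChain (· ≤ ·) (s : Set {c : Setoid α // c ≠ ⊥ ∧ c ≠ ⊤})}.ncard : ℚ) =
      1 + (-1 : ℚ) ^ ((Nat.card α : ℤ) - 3) * ((Nat.card α - 1).factorial : ℚ) := by
  classical
  rw [euler_char_orderComplex_proper_part ℚ fun s hs =>
      (card_le_of_mem_chainsIoo_setoid hs).trans (Nat.le_succ _),
    eulerChar_setoid, neg_one_zpow_natCast_sub_three Nat.card_pos]

/-- For `n ≥ 2`, the order complex `Δ(overline{Π}_n)` of the partition lattice of
`{1,…,n}` (partitions encoded as setoids) with the extremes removed has Euler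
characteristic `1 + (-1)^{n-3}·(n-1)!`.  The `m`-dimensional simplices of the order
complex are the chains of cardinality `m + 1` in the poset, and the (integer) exponent
`n - 3` forces us to state the identity in `ℚ`. -/
theorem euler_char_orderComplex_partition_lattice (n : ℕ) (hn : 2 ≤ n) :
    ∑ m ∈ Finset.range (n + 1), (-1 : ℚ) ^ m *
        ({s : Finset {c : Setoid (Fin n) // c ≠ ⊥ ∧ c ≠ ⊤} |
            s.card = m + 1 ∧ IsChain (· ≤ ·) (s : Set {c : Setoid (Fin n) // c ≠ ⊥ ∧ c ≠ ⊤})}.ncard : ℚ) =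
      1 + (-1 : ℚ) ^ ((n : ℤ) - 3) * ((n - 1).factorial : ℚ) := by
  have : Nontrivial (Fin n) := Fin.nontrivial_iff_two_le.2 hn
  simpa only [Nat.card_fin] using euler_char_orderComplex_partition_lattice_general (Fin n)
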